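/- Let m ≥ 3 be an odd integer and let p be an odd prime. If neither 2^{(p−1)/2}·(1 + √(1 − 2m^p)) nor −2^{(p−1)/2}·(1 + √(1 − 2m^p)) is a p-th power of an element of the ring of integers of K = ℚ(√(1 − 2m^p)), then p divides the class number of K (indeed the ideal class group of K contains an element of order p). -/

import Mathlib

open Polynomial NumberField

/-- A fixed choice of complex square root of the integer `d`. -/
noncomputable def sqrtC (d : ℤ) : ℂ := (d : ℂ) ^ ((1 : ℂ) / 2)

lemma sqrtC_sq (d : ℤ) : sqrtC d ^ 2 = (d : ℂ) := by
  unfold sqrtC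
  rcases eq_or_ne (d : ℂ) 0 with h | h
  · rw [h, Complex.zero_cpow (by norm_num : (1 : ℂ) / 2 ≠ 0)]
    simp
  · rw [pow_two, ← Complex.cpow_add _ _ h]
    norm_num

lemma isIntegral_sqrtC (d : ℤ) : IsIntegral ℚ (sqrtC d) := by
  refine ⟨X ^ 2 - C (d : ℚ), monic_X_pow_sub_C _ two_ne_zero, ?_⟩
  have : (Polynomial.aeval (sqrtC d)) (X ^ 2 - C (d : ℚ)) = 0 := by
    simp [sqrtC_sq]
  simpa [Polynomial.aeval_def] using this

/-- The (number) field `ℚ(√d)`, realized as a subfield of `ℂ`. -/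
noncomputable def Qsqrt (d : ℤ) : IntermediateField ℚ ℂ :=
  IntermediateField.adjoin ℚ {sqrtC d}

instance (d : ℤ) : FiniteDimensional ℚ (Qsqrt d) :=
  IntermediateField.adjoin.finiteDimensional (isIntegral_sqrtC d)

instance (d : ℤ) : NumberField (Qsqrt d) := ⟨⟩

/-- The element `√d` of `ℚ(√d)`. -/
noncomputable def sqrtElem (d : ℤ) : Qsqrt d :=
  ⟨sqrtC d, IntermediateField.mem_adjoin_simple_self ℚ (sqrtC d)⟩

/-!
Put `θ = √(1 - 2 m ^ p)`, so that `(1 + θ) (1 - θ) = 2 m ^ p`. The ideal `P = (1 + θ, 1 - θ)`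
satisfies `P ^ 2 = (2)`, and the cofactors of `P` in `(1 + θ)` and `(1 - θ)` are coprime with
product `(m) ^ p`. Hence `(1 + θ) = P A ^ p`, and `(2 ^ ((p - 1) / 2) (1 + θ)) = (P A) ^ p`. The
class of `P A` thus has order `1` or `p`. If `P A` were principal, `2 ^ ((p - 1) / 2) (1 + θ)` would
be a unit times a `p`-th power. But the unit group is finite, and reduction modulo `P`, whose
residue field is `𝔽₂`, is injective on roots of unity of odd order, so every unit is itself a
`p`-th power.
-/

section IdealFactorization

variable {R : Type*} [CommRing R]

theorem span_pair_one_add_one_sub_sq {θ a : R} (hθ : θ ^ 2 = 1 - 2 * a) (ha : IsCoprime a 2) :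
    Ideal.span {1 + θ, 1 - θ} ^ 2 = Ideal.span {2} := by
  rw [sq]
  apply le_antisymm
  · rw [Ideal.span_pair_mul_span_pair, Ideal.span_le]
    rintro x (rfl | rfl | rfl | rfl) <;> rw [SetLike.mem_coe, Ideal.mem_span_singleton]
    · exact ⟨1 + θ - a, by linear_combination hθ⟩
    · exact ⟨a, by linear_combination -hθ⟩
    · exact ⟨a, by linear_combination -hθ⟩
    · exact ⟨1 - θ - a, by linear_combination hθ⟩
  · rw [Ideal.span_singleton_le_iff_mem]
    set P := Ideal.span {1 + θ, 1 - θ}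
    have h_add : 1 + θ ∈ P := Ideal.subset_span (by simp)
    have h_sub : 1 - θ ∈ P := Ideal.subset_span (by simp)
    have h_two : 2 ∈ P := by simpa [one_add_one_eq_two] using P.add_mem h_add h_sub
    obtain ⟨x, y, hxy⟩ := ha
    have : (2 : R) = x * ((1 + θ) * (1 - θ)) + y * (2 * 2) := by
      linear_combination x * hθ - 2 * hxy
    rw [this]
    exact add_mem (Ideal.mul_mem_left _ _ (Ideal.mul_mem_mul h_add h_sub))
      (Ideal.mul_mem_left _ _ (Ideal.mul_mem_mul h_two h_two))

variable [IsDedekindDomain R] {a b c q : R} {n : ℕ}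

/-- `(a, b)` is the gcd of `(a)` and `(b)`; the cofactors are coprime with product `(c) ^ n`. -/
theorem exists_span_singleton_eq_span_pair_mul_pow (ha : a ≠ 0)
    (hP : Ideal.span {a, b} ^ 2 = Ideal.span {q}) (hab : a * b = q * c ^ n) :
    ∃ A : Ideal R, Ideal.span {a} = Ideal.span {a, b} * A ^ n := by
  classical
  set P := Ideal.span {a, b} with hP_def
  have hP0 : P ≠ 0 := fun h ↦ ha <| by
    have : a ∈ P := Ideal.subset_span (by simp)
    simpa [h] using this
  obtain ⟨I, hI⟩ : P ∣ Ideal.span {a} :=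
    Ideal.dvd_iff_le.2 (Ideal.span_mono (by simp))
  obtain ⟨J, hJ⟩ : P ∣ Ideal.span {b} :=
    Ideal.dvd_iff_le.2 (Ideal.span_mono (by simp))
  have hIJ : I * J = Ideal.span {c} ^ n := by
    apply mul_left_cancel₀ (pow_ne_zero 2 hP0)
    calc P ^ 2 * (I * J) = (P * I) * (P * J) := by ring
      _ = P ^ 2 * Ideal.span {c} ^ n := by
        rw [← hI, ← hJ, hP, Ideal.span_singleton_pow, Ideal.span_singleton_mul_span_singleton,
          Ideal.span_singleton_mul_span_singleton, hab]
  have hcop : IsCoprime I J := by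
    rw [Ideal.isCoprime_iff_sup_eq, ← Ideal.one_eq_top]
    apply mul_left_cancel₀ hP0
    rw [Ideal.mul_sup, ← hI, ← hJ, mul_one, hP_def, Ideal.span_insert]
  obtain ⟨A, rfl⟩ := exists_eq_pow_of_mul_eq_pow_of_coprime hcop hIJ
  exact ⟨A, hI⟩

theorem exists_pow_eq_span_singleton (hn : Odd n) (ha : a ≠ 0)
    (hP : Ideal.span {a, b} ^ 2 = Ideal.span {q}) (hab : a * b = q * c ^ n) :
    ∃ B : Ideal R, B ^ n = Ideal.span {q ^ ((n - 1) / 2) * a} := by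
  obtain ⟨A, hA⟩ := exists_span_singleton_eq_span_pair_mul_pow ha hP hab
  obtain ⟨k, rfl⟩ := hn
  refine ⟨Ideal.span {a, b} * A, ?_⟩
  rw [show (2 * k + 1 - 1) / 2 = k by omega, ← Ideal.span_singleton_mul_span_singleton,
    ← Ideal.span_singleton_pow, ← hP, hA]
  ring

theorem exists_orderOf_classGroup_eq_of_pow_eq_span {p : ℕ} (hp : p.Prime) {B : Ideal R} {α : R}
    (hB : B ^ p = Ideal.span {α}) (hunit : ∀ u : Rˣ, ∃ v, v ^ p = u) (hα : ∀ β, β ^ p ≠ α) :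
    ∃ c : ClassGroup R, orderOf c = p := by
  have := Fact.mk hp
  have hα0 : α ≠ 0 := fun h ↦ hα 0 (by rw [h, zero_pow hp.ne_zero])
  have hB0 : B ≠ 0 := fun h ↦ hα0 <| by
    rwa [h, zero_pow hp.ne_zero, eq_comm, Ideal.zero_eq_bot, Ideal.span_singleton_eq_bot] at hB
  have hBmem := mem_nonZeroDivisors_of_ne_zero hB0
  refine ⟨ClassGroup.mk0 ⟨B, hBmem⟩, orderOf_eq_prime ?_ fun h ↦ ?_⟩
  · rw [← map_pow, SubmonoidClass.mk_pow, ClassGroup.mk0_eq_one_iff, hB]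
    exact ⟨⟨α, rfl⟩⟩
  · obtain ⟨γ, rfl⟩ := ((ClassGroup.mk0_eq_one_iff hBmem).1 h).principal
    rw [Ideal.submodule_span_eq, Ideal.span_singleton_pow,
      Ideal.span_singleton_eq_span_singleton] at hB
    obtain ⟨u, hu⟩ := hB
    obtain ⟨v, rfl⟩ := hunit u
    exact hα (γ * v) (by rw [mul_pow, ← hu, Units.val_pow_eq_pow_val])

end IdealFactorization

section NumberField

variable {K : Type*} [Field K]

theorem isTotallyComplex_of_sq_eq_of_neg {x : K} {d : ℤ} (hd : d < 0) (hx : x ^ 2 = d) :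
    IsTotallyComplex K where
  isComplex w := by
    rw [← InfinitePlace.not_isReal_iff_isComplex]
    intro hw
    have hsq : w.embedding_of_isReal hw x ^ 2 = d := by rw [← map_pow, hx, map_intCast]
    have : (d : ℝ) < 0 := by exact_mod_cast hd
    linarith [sq_nonneg (w.embedding_of_isReal hw x)]

variable [NumberField K]

theorem absNorm_eq_of_pow_finrank_eq_span {I : Ideal (𝓞 K)} {q : ℕ}
    (hI : I ^ Module.finrank ℚ K = Ideal.span {(q : 𝓞 K)}) : I.absNorm = q := by
  rw [← Nat.pow_left_inj (Module.finrank_pos (R := ℚ) (M := K)).ne', ← map_pow,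
    hI, Ideal.absNorm_span_natCast, RingOfIntegers.rank]

theorem unit_eq_one_of_pow_eq_one {I : Ideal (𝓞 K)} {n : ℕ} (hI : I.absNorm ≠ 1)
    (hn : I.absNorm.Coprime n) (hn' : (Nat.card (𝓞 K ⧸ I)ˣ).Coprime n) {u : (𝓞 K)ˣ}
    (hu : u ^ n = 1) : u = 1 := by
  have : NeZero n := ⟨by rintro rfl; exact hI (by simpa using hn)⟩
  have hmem : u ∈ rootsOfUnity n (𝓞 K) := hu
  have hred : I.rootsOfUnityMapQuot n ⟨u, hmem⟩ = 1 := by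
    apply (powCoprime hn').injective
    rw [powCoprime_apply, powCoprime_one, ← map_pow, ← map_one (I.rootsOfUnityMapQuot n)]
    exact congrArg _ (Subtype.ext hu)
  exact congrArg Subtype.val
    (Ideal.rootsOfUnityMapQuot_injective n hI hn (hred.trans (map_one _).symm))

theorem finite_units_of_rank_eq_zero (hK : Units.rank K = 0) : Finite (𝓞 K)ˣ := by
  have : IsEmpty (Fin (Units.rank K)) := by rw [hK]; infer_instance
  have htors : Units.torsion K = ⊤ := by
    simpa [Set.range_eq_empty] using Units.closure_fundSystem_sup_torsion_eq_top K
  have : Finite (⊤ : Subgroup (𝓞 K)ˣ) := htors ▸ inferInstance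
  exact Finite.of_equiv _ Subgroup.topEquiv.toEquiv

theorem units_rank_eq_zero_of_isQuadraticExtension [IsTotallyComplex K]
    [Algebra.IsQuadraticExtension ℚ K] : Units.rank K = 0 := by
  have h := IsTotallyComplex.finrank K
  rw [Algebra.IsQuadraticExtension.finrank_eq_two ℚ K] at h
  rw [Units.rank, InfinitePlace.card_eq_nrRealPlaces_add_nrComplexPlaces,
    IsTotallyComplex.nrRealPlaces_eq_zero]
  omega

/-- An ideal of norm `2` has residue ring `𝔽₂`, whose only unit is `1`, so `K` contains no
nontrivial root of unity of odd order. -/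
theorem exists_unit_pow_eq_of_absNorm_eq_two (hK : Units.rank K = 0) {P : Ideal (𝓞 K)}
    (hP : P.absNorm = 2) {n : ℕ} (hn : Odd n) (u : (𝓞 K)ˣ) : ∃ v, v ^ n = u := by
  have := finite_units_of_rank_eq_zero hK
  have hcard : Nat.card (𝓞 K ⧸ P) = 2 := hP
  have : Finite (𝓞 K ⧸ P) := Nat.finite_of_card_ne_zero (by omega)
  have hprime : P.IsPrime := Ideal.isPrime_of_irreducible_absNorm (hP ▸ Nat.prime_two)
  have hunits : Nat.card (𝓞 K ⧸ P)ˣ = 1 := by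
    let _ := (Finite.isDomain_to_isField (𝓞 K ⧸ P)).toField
    rw [Nat.card_units, hcard]
  have hinj : Function.Injective (powMonoidHom n : (𝓞 K)ˣ →* (𝓞 K)ˣ) :=
    (injective_iff_map_eq_one _).2 fun _ ↦
      unit_eq_one_of_pow_eq_one (I := P) (by simp [hP]) (by rw [hP]; exact hn.coprime_two_left)
        (by rw [hunits]; exact Nat.coprime_one_left n)
  exact Finite.surjective_of_injective hinj u

theorem p_dvd_classNumber_of_not_pth_power_general [IsTotallyComplex K]
    [Algebra.IsQuadraticExtension ℚ K] {p : ℕ} (hp : p.Prime) (hpodd : Odd p) {m θ : 𝓞 K}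
    (hm : IsCoprime m 2) (hθ : θ ^ 2 = 1 - 2 * m ^ p)
    (hnot : ∀ β : 𝓞 K, β ^ p ≠ 2 ^ ((p - 1) / 2) * (1 + θ)) :
    p ∣ classNumber K ∧ ∃ c : ClassGroup (𝓞 K), orderOf c = p := by
  have hθ0 : 1 + θ ≠ 0 := fun h ↦ hnot 0 (by rw [h, mul_zero, zero_pow hp.ne_zero])
  have hP := span_pair_one_add_one_sub_sq hθ hm.pow_left
  obtain ⟨B, hB⟩ := exists_pow_eq_span_singleton (c := m) hpodd hθ0 hP
    (by linear_combination -hθ)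
  have hnorm : (Ideal.span {1 + θ, 1 - θ}).absNorm = 2 := absNorm_eq_of_pow_finrank_eq_span <| by
    rw [Algebra.IsQuadraticExtension.finrank_eq_two, hP, Nat.cast_ofNat]
  obtain ⟨c, hc⟩ := exists_orderOf_classGroup_eq_of_pow_eq_span hp hB
    (exists_unit_pow_eq_of_absNorm_eq_two units_rank_eq_zero_of_isQuadraticExtension hnorm hpodd)
    hnot
  exact ⟨hc ▸ orderOf_dvd_card, c, hc⟩

end NumberField

section Qsqrt

variable {d : ℤ}

theorem sqrtElem_sq (d : ℤ) : sqrtElem d ^ 2 = d :=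
  Subtype.ext (by simpa [sqrtElem] using sqrtC_sq d)

theorem isIntegral_sqrtElem (d : ℤ) : IsIntegral ℤ (sqrtElem d) :=
  .of_pow two_pos <| by rw [sqrtElem_sq]; exact isIntegral_algebraMap (R := ℤ) (x := d)

/-- The element `√d` of the ring of integers of `ℚ(√d)`. -/
noncomputable def sqrtInteger (d : ℤ) : 𝓞 (Qsqrt d) :=
  ⟨sqrtElem d, isIntegral_sqrtElem d⟩

theorem sqrtInteger_sq (d : ℤ) : sqrtInteger d ^ 2 = d :=
  RingOfIntegers.coe_injective <| by
    rw [map_pow, map_intCast]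
    exact sqrtElem_sq d

theorem isTotallyComplex_Qsqrt (hd : d < 0) : IsTotallyComplex (Qsqrt d) :=
  isTotallyComplex_of_sq_eq_of_neg hd (sqrtElem_sq d)

theorem isQuadraticExtension_Qsqrt (hd : ¬IsSquare d) :
    Algebra.IsQuadraticExtension ℚ (Qsqrt d) where
  finrank_eq_two' := by
    have hirr : Irreducible (X ^ 2 - C (d : ℚ)) := X_pow_sub_C_irreducible_of_prime Nat.prime_two
      fun b hb ↦ hd (Rat.isSquare_intCast_iff.1 ⟨b, by rw [← hb, sq]⟩)
    have hmin : X ^ 2 - C (d : ℚ) = minpoly ℚ (sqrtC d) :=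
      minpoly.eq_of_irreducible_of_monic hirr (by simp [sqrtC_sq])
        (monic_X_pow_sub_C _ two_ne_zero)
    rw [Qsqrt, IntermediateField.adjoin.finrank (isIntegral_sqrtC d), ← hmin,
      natDegree_X_pow_sub_C]

end Qsqrt

/-- Let `m ≥ 3` be odd and `p` an odd prime. If neither
`2 ^ ((p-1)/2) (1 + √(1 - 2 m ^ p))` nor its negative is a `p`-th power of an element of the
ring of integers of `K = ℚ(√(1 - 2 m ^ p))`, then `p` divides the class number of `K`;
indeed the ideal class group of `K` contains an element of order `p`. -/
theorem p_dvd_classNumber_of_not_pth_power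
    (m : ℤ) (hm : 3 ≤ m) (hmodd : Odd m)
    (p : ℕ) (hp : p.Prime) (hpodd : Odd p)
    (hnot : ¬ ∃ β : 𝓞 (Qsqrt (1 - 2 * m ^ p)),
        (β : Qsqrt (1 - 2 * m ^ p)) ^ p =
            2 ^ ((p - 1) / 2) * (1 + sqrtElem (1 - 2 * m ^ p)) ∨
        (β : Qsqrt (1 - 2 * m ^ p)) ^ p =
            -(2 ^ ((p - 1) / 2) * (1 + sqrtElem (1 - 2 * m ^ p)))) :
    p ∣ NumberField.classNumber (Qsqrt (1 - 2 * m ^ p)) ∧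
    ∃ c : ClassGroup (𝓞 (Qsqrt (1 - 2 * m ^ p))), orderOf c = p := by
  have hd : 1 - 2 * m ^ p < 0 := by linarith [one_le_pow₀ (n := p) (by omega : 1 ≤ m)]
  have := isTotallyComplex_Qsqrt hd
  have := isQuadraticExtension_Qsqrt fun h ↦ hd.not_ge h.nonneg
  have hm2 : IsCoprime (m : 𝓞 (Qsqrt (1 - 2 * m ^ p))) 2 :=
    mod_cast (Int.isCoprime_two_right.2 hmodd).intCast
  refine p_dvd_classNumber_of_not_pth_power_general hp hpodd hm2
    ((sqrtInteger_sq _).trans (by simp)) fun β hβ ↦ hnot ⟨β, .inl ?_⟩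
  rw [← map_pow, hβ, map_mul, map_pow, map_add, map_one, map_ofNat]
  rfl
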